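/- Let G be a finite nilpotent GC*-group. Then either G is abelian, or G is a group of prime power order with cyclic center and commutator subgroup of prime order. -/

import Mathlib

/-!
Multiplying a non-linear irreducible character `χ` by a linear character preserves its degree, and
Galois conjugation preserves kernels, so in a GC*-group every linear character is trivial on
`ker χ`; hence `ker χ ≤ G'`, and every normal subgroup of `G` is comparable with `G'`. For the
Sylow subgroups of a nilpotent group this forces `G` to be a `p`-group. Quotients of GC*-groups
are GC*-groups, so the crucial point is that `|G'| = p²` is impossible.

Let `|G'| = p²`, let `N` be a central subgroup of order `p`, and choose non-linear irreducible
characters `χ`, `ψ` with `N ≤ ker χ` and `N ≰ ker ψ`. They are not Galois conjugate, so it is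
enough to show that their degrees agree. Since the `p`-adic valuation of a square is even, it
suffices to see that the ratio of `χ(1)²` and `ψ(1)²` is a power of `p` with exponent at most one in
absolute value.

* If `G' ≤ Z(G)`, then `χ(1)² [Z(χ) : Z(G)] = [G : Z(G)]`, where `Z(χ)` is the center of `χ` and
  `[Z(χ) : Z(G)]` divides `|ker χ|`, which divides `p`; the same holds for `ψ`.
* Otherwise `Z(G) = N = ker χ` and `Z(χ) = G'`, so `χ(1)² = [G : G']` and `G` has exponent dividing
  `p³`. The stabilizer of `ψ` in the group of linear characters has order `ψ(1)² / p` by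
  orthogonality, and index at most `φ(p³) < p³` because the twists of `ψ` are Galois conjugate. This
  index is a power of `p`, so `[G : G'] = pⁱ ψ(1)² / p` with `i ≤ 2`.
-/

noncomputable section

/-- `χ : G → ℂ` is the character of some irreducible complex representation of `G`. -/
def IsIrrChar {G : Type*} [Group G] (χ : G → ℂ) : Prop :=
  ∃ (n : ℕ) (ρ : Representation ℂ G (Fin n → ℂ)),
    0 < n ∧
    (∀ U : Submodule ℂ (Fin n → ℂ), (∀ g : G, U.map (ρ g) ≤ U) → U = ⊥ ∨ U = ⊤) ∧
    (∀ g : G, χ g = LinearMap.trace ℂ (Fin n → ℂ) (ρ g))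

/-- Two complex characters are Galois conjugate: some field automorphism (which, on the
cyclotomic field generated by the character values, restricts to a Galois automorphism
over `ℚ`) carries the values of `χ` to those of `ψ`. -/
def GaloisConj {G : Type*} [Group G] (χ ψ : G → ℂ) : Prop :=
  ∃ σ : ℂ ≃+* ℂ, ∀ g : G, ψ g = σ (χ g)

/-- `G` is a `GC*`-group: any two non-linear irreducible complex characters of the same
degree are Galois conjugate. -/
def IsGCStar (G : Type*) [Group G] : Prop :=
  ∀ χ ψ : G → ℂ, IsIrrChar χ → IsIrrChar ψ → χ 1 ≠ 1 → ψ 1 ≠ 1 →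
    χ 1 = ψ 1 → GaloisConj χ ψ

namespace GCStar

open Representation
open scoped commutatorElement MonoidAlgebra

section Irreducible

variable {k G H V W : Type*} [Field k] [Monoid G] [Monoid H] [AddCommGroup V] [Module k V]
  [AddCommGroup W] [Module k W]

theorem isIrreducible_iff {ρ : Representation k G V} :
    ρ.IsIrreducible ↔
      Nontrivial V ∧ ∀ U : Submodule k V, (∀ g, U ≤ U.comap (ρ g)) → U = ⊥ ∨ U = ⊤ := by
  constructor
  · intro hρ
    refine ⟨not_subsingleton_iff_nontrivial.mp fun _ => ?_, fun U hU => ?_⟩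
    · exact bot_ne_top (α := Subrepresentation ρ)
        (Subrepresentation.toSubmodule_injective (Subsingleton.elim _ _))
    · exact (eq_bot_or_eq_top (⟨U, hU⟩ : Subrepresentation ρ)).imp
        (congrArg Subrepresentation.toSubmodule) (congrArg Subrepresentation.toSubmodule)
  · rintro ⟨_, h⟩
    have : Nontrivial (Subrepresentation ρ) :=
      ⟨⊥, ⊤, fun h => bot_ne_top (α := Submodule k V) (congrArg Subrepresentation.toSubmodule h)⟩
    exact ⟨fun σ => (h σ.toSubmodule fun g _ hv => σ.apply_mem_toSubmodule g hv).imp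
      (fun hσ => Subrepresentation.toSubmodule_injective hσ)
      (fun hσ => Subrepresentation.toSubmodule_injective hσ)⟩

theorem nontrivial_of_isIrreducible (ρ : Representation k G V) [ρ.IsIrreducible] :
    Nontrivial V :=
  (isIrreducible_iff.mp ‹ρ.IsIrreducible›).1

theorem isIrreducible_of_forall_exists_smul {ρ : Representation k G V} [ρ.IsIrreducible]
    {σ : Representation k H W} (e : V ≃ₗ[k] W)
    (h : ∀ g, ∃ (x : H) (c : k), ∀ v, e (ρ g v) = c • σ x (e v)) : σ.IsIrreducible := by
  obtain ⟨_, hρ⟩ := isIrreducible_iff.mp ‹ρ.IsIrreducible›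
  refine isIrreducible_iff.mpr ⟨e.injective.nontrivial, fun U hU => ?_⟩
  refine (hρ (U.comap (e : V →ₗ[k] W)) fun g v hv => ?_).imp (fun hU' => ?_) (fun hU' => ?_)
  · obtain ⟨x, c, hxc⟩ := h g
    change e (ρ g v) ∈ U
    exact hxc v ▸ U.smul_mem c (hU x hv)
  · rw [← Submodule.map_comap_eq_of_surjective (f := (e : V →ₗ[k] W)) e.surjective U, hU',
      Submodule.map_bot]
  · rw [← Submodule.map_comap_eq_of_surjective (f := (e : V →ₗ[k] W)) e.surjective U, hU',
      Submodule.map_top, LinearEquiv.range]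

theorem isIrreducible_comp_iff {ρ : Representation k H V} {f : G →* H}
    (hf : Function.Surjective f) :
    IsIrreducible (MonoidHom.comp ρ f) ↔ ρ.IsIrreducible where
  mp _ := isIrreducible_of_forall_exists_smul (ρ := MonoidHom.comp ρ f) (.refl k V)
    fun g => ⟨f g, 1, fun v => (one_smul k _).symm⟩
  mpr _ := isIrreducible_of_forall_exists_smul (ρ := ρ) (.refl k V) fun x => by
    obtain ⟨g, rfl⟩ := hf x
    exact ⟨g, 1, fun v => (one_smul k _).symm⟩

theorem exists_equiv_isIrreducible [FiniteDimensional k V] (ρ : Representation k G V)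
    [ρ.IsIrreducible] :
    ∃ σ : Representation k G (Fin (Module.finrank k V) → k),
      σ.IsIrreducible ∧ Nonempty (ρ.Equiv σ) := by
  let e := (Module.finBasis k V).equivFun
  let σ : Representation k G (Fin (Module.finrank k V) → k) :=
    MonoidHom.comp (e.conjAlgEquiv k : Module.End k V →* _) ρ
  refine ⟨σ, isIrreducible_of_forall_exists_smul (ρ := ρ) e fun g => ⟨g, 1, fun v => ?_⟩,
    ⟨.mk e fun g => ?_⟩⟩
  · simp [σ]
  · ext v
    simp [σ]

theorem exists_eq_smul_one_of_forall_commute [IsAlgClosed k] [FiniteDimensional k V]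
    (ρ : Representation k G V) [ρ.IsIrreducible] {T : Module.End k V}
    (hT : ∀ g, Commute T (ρ g)) : ∃ c : k, T = c • 1 := by
  let f : IntertwiningMap ρ ρ := ⟨T, hT⟩
  obtain ⟨c, hc⟩ := IsIrreducible.algebraMap_intertwiningMap_bijective_of_isAlgClosed.2 f
  exact ⟨c, LinearMap.ext fun v => (DFunLike.congr_fun hc v).symm⟩

end Irreducible

section SeparatingPoints

theorem isIrreducible_ofModule' {k G : Type*} [Field k] [Monoid G] (M : Type*) [AddCommGroup M]
    [Module k M] [Module k[G] M] [IsScalarTower k k[G] M] [IsSimpleModule k[G] M] :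
    (ofModule' (k := k) (G := G) M).IsIrreducible := by
  refine isIrreducible_iff.mpr ⟨IsSimpleModule.nontrivial k[G] M, fun U hU => ?_⟩
  let U' : Submodule k[G] M :=
    { U with
      smul_mem' a v hv := by
        induction a using MonoidAlgebra.induction_on with
        | of g => simpa [ofModule'] using hU g hv
        | add a b ha hb => exact add_smul a b v ▸ U.add_mem ha hb
        | smul c a ha => exact smul_assoc c a v ▸ U.smul_mem c ha }
  exact (eq_bot_or_eq_top U').imp
    (fun h => SetLike.coe_injective (congrArg (SetLike.coe : Submodule k[G] M → Set M) h))
    (fun h => SetLike.coe_injective (congrArg (SetLike.coe : Submodule k[G] M → Set M) h))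

theorem exists_isIrreducible_apply_ne_one (k : Type*) {G : Type*} [Field k] [Group G] [Finite G]
    [NeZero (Nat.card G : k)] {g : G} (hg : g ≠ 1) :
    ∃ (n : ℕ) (ρ : Representation k G (Fin n → k)), ρ.IsIrreducible ∧ ρ g ≠ 1 := by
  have hg' : MonoidAlgebra.of k G g - 1 ∉ Ring.jacobson k[G] := by
    rw [IsSemisimpleRing.jacobson_eq_bot, Ideal.mem_bot, sub_eq_zero,
      ← map_one (MonoidAlgebra.of k G)]
    exact fun h => hg (MonoidAlgebra.of_injective h)
  obtain ⟨I, hI, hgI⟩ : ∃ I : Ideal k[G], IsCoatom I ∧ MonoidAlgebra.of k G g - 1 ∉ I := by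
    simpa [Ring.jacobson, Module.jacobson, Submodule.mem_sInf] using hg'
  have : IsSimpleModule k[G] (k[G] ⧸ I) := isSimpleModule_iff_isCoatom.mpr hI
  let ρ : Representation k G (k[G] ⧸ I) := ofModule' (k[G] ⧸ I)
  have : ρ.IsIrreducible := isIrreducible_ofModule' _
  have : FiniteDimensional k (k[G] ⧸ I) := Module.Finite.trans k[G] _
  obtain ⟨σ, hσ, ⟨e⟩⟩ := exists_equiv_isIrreducible ρ
  refine ⟨_, σ, hσ, fun hσg => hgI ?_⟩
  have hρg : ρ g = 1 := by
    rw [← e.symm.conj_apply_self g, hσg]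
    exact map_one (e.symm.toLinearEquiv.conjAlgEquiv k)
  refine (Submodule.Quotient.eq I).mp ?_
  simpa [ρ, ofModule', ← Submodule.Quotient.mk_smul] using
    LinearMap.congr_fun hρg (Submodule.Quotient.mk (p := I) 1)

end SeparatingPoints

section Twist

variable {k G V : Type*} [Field k] [Monoid G] [AddCommGroup V] [Module k V]

/-- The tensor product of a representation with a linear character. -/
def twist (ρ : Representation k G V) (l : G →* kˣ) : Representation k G V where
  toFun g := (l g : k) • ρ g
  map_one' := by simp
  map_mul' g h := by rw [map_mul, map_mul, Units.val_mul, smul_mul_smul_comm]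

@[simp]
theorem twist_apply (ρ : Representation k G V) (l : G →* kˣ) (g : G) :
    twist ρ l g = (l g : k) • ρ g :=
  rfl

theorem character_twist (ρ : Representation k G V) (l : G →* kˣ) (g : G) :
    (twist ρ l).character g = l g * ρ.character g := by
  simp [character]

instance isIrreducible_twist (ρ : Representation k G V) [ρ.IsIrreducible] (l : G →* kˣ) :
    (twist ρ l).IsIrreducible :=
  isIrreducible_of_forall_exists_smul (ρ := ρ) (.refl k V)
    fun g => ⟨g, ((l g)⁻¹ : kˣ), fun v => by simp [smul_smul]⟩

end Twist

section Commutators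

variable {G : Type*} [Group G]

theorem commutatorElement_pow_left {g x : G} (h : Commute g ⁅g, x⁆) (n : ℕ) :
    ⁅g ^ n, x⁆ = ⁅g, x⁆ ^ n := by
  induction n with
  | zero => simp
  | succ n ih =>
    calc ⁅g ^ (n + 1), x⁆ = g ^ n * ⁅g, x⁆ * (g ^ n)⁻¹ * ⁅g ^ n, x⁆ := by
          simp [commutatorElement_def, mul_assoc, pow_succ]
      _ = ⁅g, x⁆ ^ (n + 1) := by
          rw [(h.pow_left n).eq, mul_inv_cancel_right, ih, pow_succ']

theorem mem_center_iff_commutatorElement {g : G} :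
    g ∈ Subgroup.center G ↔ ∀ x : G, ⁅g, x⁆ = 1 := by
  simp [Subgroup.mem_center_iff, commutatorElement_eq_one_iff_mul_comm, eq_comm]

theorem commutatorElement_mem_ker_iff {M : Type*} [Monoid M] {f : G →* M} {g x : G} :
    ⁅g, x⁆ ∈ f.ker ↔ Commute (f g) (f x) := by
  have hgx : f g * f x = f ⁅g, x⁆ * (f x * f g) := by simp [← map_mul, commutatorElement_def]
  rw [MonoidHom.mem_ker, Commute, SemiconjBy, hgx, ← map_mul f x g,
    ((Group.isUnit (x * g)).map f).mul_eq_right]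

theorem commutatorElement_mem_commutator (g x : G) : ⁅g, x⁆ ∈ commutator G :=
  Subgroup.commutator_mem_commutator (Subgroup.mem_top g) (Subgroup.mem_top x)

theorem pow_card_mem_center {N : Subgroup G} (hN : N ≤ Subgroup.center G) {g : G}
    (hg : ∀ x : G, ⁅g, x⁆ ∈ N) : g ^ Nat.card N ∈ Subgroup.center G :=
  mem_center_iff_commutatorElement.mpr fun x => by
    rw [commutatorElement_pow_left (Subgroup.mem_center_iff.mp (hN (hg x)) g)]
    exact orderOf_dvd_iff_pow_eq_one.mp (Subgroup.orderOf_dvd_natCard _ (hg x))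

theorem map_commutator_of_surjective {H : Type*} [Group H] {f : G →* H}
    (hf : Function.Surjective f) : (commutator G).map f = commutator H := by
  rw [commutator_def, Subgroup.map_commutator, Subgroup.map_top_of_surjective f hf, commutator_def]

end Commutators

section CharCenter

variable {k G V : Type*} [Field k] [Group G] [AddCommGroup V] [Module k V]

/-- The center `Z(χ)` of the character of `ρ`: the elements of `G` that are central modulo the
kernel of `ρ`. When `ρ` is irreducible over an algebraically closed field, these are the elements
acting by scalars. -/
def charCenter (ρ : Representation k G V) : Subgroup G :=
  (Subgroup.center (G ⧸ MonoidHom.ker ρ)).comap (QuotientGroup.mk' (MonoidHom.ker ρ))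

theorem mem_charCenter {ρ : Representation k G V} {g : G} :
    g ∈ charCenter ρ ↔ ∀ x, ⁅g, x⁆ ∈ MonoidHom.ker ρ := by
  rw [charCenter, Subgroup.mem_comap, mem_center_iff_commutatorElement,
    (QuotientGroup.mk'_surjective _).forall]
  exact forall_congr' fun x => QuotientGroup.eq_one_iff ⁅g, x⁆

theorem center_le_charCenter (ρ : Representation k G V) : Subgroup.center G ≤ charCenter ρ :=
  fun _ hg => mem_charCenter.mpr fun x =>
    mem_center_iff_commutatorElement.mp hg x ▸ one_mem _

theorem ker_le_charCenter (ρ : Representation k G V) : MonoidHom.ker ρ ≤ charCenter ρ :=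
  fun _ hg => mem_charCenter.mpr fun x =>
    Subgroup.commutator_le_left _ ⊤ (Subgroup.commutator_mem_commutator hg (Subgroup.mem_top x))

theorem commute_of_mem_charCenter {ρ : Representation k G V} {g : G} (hg : g ∈ charCenter ρ)
    (x : G) : Commute (ρ g) (ρ x) :=
  commutatorElement_mem_ker_iff.mp (mem_charCenter.mp hg x)

theorem commutator_le_charCenter_iff {ρ : Representation k G V} :
    commutator G ≤ charCenter ρ ↔
      commutator (G ⧸ MonoidHom.ker ρ) ≤ Subgroup.center (G ⧸ MonoidHom.ker ρ) := by
  rw [charCenter, ← Subgroup.map_le_iff_le_comap,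
    map_commutator_of_surjective (QuotientGroup.mk'_surjective _)]

theorem pow_card_commutator_quotient_mem_charCenter {ρ : Representation k G V}
    (h : commutator G ≤ charCenter ρ) (g : G) :
    g ^ Nat.card (commutator (G ⧸ MonoidHom.ker ρ)) ∈ charCenter ρ :=
  pow_card_mem_center (g := (g : G ⧸ MonoidHom.ker ρ)) (commutator_le_charCenter_iff.mp h)
    (commutatorElement_mem_commutator _)

variable [IsAlgClosed k] [FiniteDimensional k V] (ρ : Representation k G V) [ρ.IsIrreducible]

theorem exists_centralCharacter :
    ∃ ω : charCenter ρ →* kˣ, ∀ g : charCenter ρ, ρ g = (ω g : k) • 1 := by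
  have := nontrivial_of_isIrreducible ρ
  have hinj := smul_left_injective k (one_ne_zero (α := Module.End k V))
  choose c hc using fun g : charCenter ρ =>
    exists_eq_smul_one_of_forall_commute ρ (commute_of_mem_charCenter g.2)
  let ω : charCenter ρ →* k :=
    { toFun := c
      map_one' := hinj (by simp [← hc])
      map_mul' a b := hinj (by
        change c (a * b) • (1 : Module.End k V) = (c a * c b) • (1 : Module.End k V)
        rw [← hc, Subgroup.coe_mul, map_mul, hc, hc, smul_mul_smul_comm, one_mul]) }
  exact ⟨ω.toHomUnits, hc⟩

theorem exists_apply_eq_smul_one {g : G} (hg : g ∈ charCenter ρ) : ∃ c : kˣ, ρ g = (c : k) • 1 :=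
  let ⟨ω, hω⟩ := exists_centralCharacter ρ
  ⟨ω ⟨g, hg⟩, hω ⟨g, hg⟩⟩

theorem character_mul_character_inv {g : G} (hg : g ∈ charCenter ρ) :
    ρ.character g * ρ.character g⁻¹ = (Module.finrank k V : k) ^ 2 := by
  obtain ⟨ω, hω⟩ := exists_centralCharacter ρ
  have h : ρ g⁻¹ = ((ω ⟨g, hg⟩)⁻¹ : kˣ).1 • 1 := map_inv ω ⟨g, hg⟩ ▸ hω (⟨g, hg⟩⁻¹)
  rw [character, character, h, hω ⟨g, hg⟩]
  simp only [map_smul, LinearMap.trace_one, smul_eq_mul]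
  linear_combination (Module.finrank k V : k) ^ 2 * (ω ⟨g, hg⟩).mul_inv

theorem character_eq_zero_of_commutatorElement_mem {g x : G} (hgx : ⁅x, g⁆ ∈ charCenter ρ)
    (hne : ⁅x, g⁆ ∉ MonoidHom.ker ρ) : ρ.character g = 0 := by
  obtain ⟨c, hc⟩ := exists_apply_eq_smul_one ρ hgx
  have hc1 : (c : k) ≠ 1 := fun h => hne (by rw [MonoidHom.mem_ker, hc, h, one_smul])
  have h : ρ.character g = c * ρ.character g := by
    calc ρ.character g = ρ.character (⁅x, g⁆ * g) := by
          rw [← char_conj ρ g x]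
          simp [commutatorElement_def]
      _ = c * ρ.character g := by simp [character, hc]
  exact (mul_left_eq_self₀.mp h.symm).resolve_left hc1

theorem exists_charCenter_eq_zpowers_sup_ker [Finite G] :
    ∃ g, charCenter ρ = Subgroup.zpowers g ⊔ MonoidHom.ker ρ := by
  obtain ⟨ω, hω⟩ := exists_centralCharacter ρ
  have : Finite ω.range := Finite.of_surjective _ ω.rangeRestrict_surjective
  obtain ⟨⟨_, g, rfl⟩, hg⟩ := IsCyclic.exists_generator (α := ω.range)
  refine ⟨g, le_antisymm (fun x hx => ?_)
    (sup_le (Subgroup.zpowers_le.mpr g.2) (ker_le_charCenter ρ))⟩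
  obtain ⟨i, hi⟩ := hg ⟨_, ⟨x, hx⟩, rfl⟩
  have hωx : ω (g ^ (-i) * ⟨x, hx⟩) = 1 := by
    rw [map_mul, map_zpow, zpow_neg, inv_mul_eq_one]
    exact congrArg Subtype.val hi
  have hker : (g : G) ^ (-i) * x ∈ MonoidHom.ker ρ := by
    have := hω (g ^ (-i) * ⟨x, hx⟩)
    rwa [hωx, Units.val_one, one_smul] at this
  simpa using Subgroup.mul_mem_sup (Subgroup.zpow_mem_zpowers (g : G) i) hker

theorem isCyclic_center_of_ker_eq_bot [Finite G] (hker : MonoidHom.ker ρ = ⊥) :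
    IsCyclic (Subgroup.center G) := by
  obtain ⟨g, hg⟩ := exists_charCenter_eq_zpowers_sup_ker ρ
  have hle : Subgroup.center G ≤ Subgroup.zpowers g := by
    simpa [hg, hker] using center_le_charCenter ρ
  exact isCyclic_of_injective _ (Subgroup.inclusion_injective hle)

theorem relIndex_center_charCenter_dvd [Finite G]
    (hker : MonoidHom.ker ρ ≤ Subgroup.center G) :
    (Subgroup.center G).relIndex (charCenter ρ) ∣ Nat.card (MonoidHom.ker ρ) := by
  obtain ⟨g, hg⟩ := exists_charCenter_eq_zpowers_sup_ker ρ
  have hmap : (charCenter ρ).map (QuotientGroup.mk' (Subgroup.center G)) =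
      Subgroup.zpowers (g : G ⧸ Subgroup.center G) := by
    rw [hg, Subgroup.map_sup,
      (Subgroup.map_eq_bot_iff (MonoidHom.ker ρ)).mpr (by rwa [QuotientGroup.ker_mk']),
      sup_bot_eq, MonoidHom.map_zpowers, QuotientGroup.mk'_apply]
  have hgρ : g ∈ charCenter ρ := hg ▸ Subgroup.mem_sup_left (Subgroup.mem_zpowers g)
  have hpow : g ^ Nat.card (MonoidHom.ker ρ) ∈ Subgroup.center G :=
    pow_card_mem_center hker (mem_charCenter.mp hgρ)
  rw [← QuotientGroup.ker_mk' (Subgroup.center G), Subgroup.relIndex_ker, hmap, Nat.card_zpowers]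
  exact orderOf_dvd_of_pow_eq_one ((QuotientGroup.eq_one_iff _).mpr hpow)

end CharCenter

section Degree

variable {k G V : Type*} [Field k] [Group G] [AddCommGroup V] [Module k V]

theorem commutator_le_ker_of_finrank_eq_one (ρ : Representation k G V)
    (h : Module.finrank k V = 1) : commutator G ≤ MonoidHom.ker ρ := by
  rw [commutator_def, Subgroup.commutator_le]
  intro g _ x _
  obtain ⟨c, hc, -⟩ := (ρ g).existsUnique_eq_smul_id_of_finrank_eq_one h
  exact commutatorElement_mem_ker_iff.mpr (hc ▸ (Commute.one_left (ρ x)).smul_left c)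

variable [IsAlgClosed k] [FiniteDimensional k V]

theorem finrank_eq_one_of_commutator_le_ker (ρ : Representation k G V) [ρ.IsIrreducible]
    (h : commutator G ≤ MonoidHom.ker ρ) : Module.finrank k V = 1 := by
  let ρ' : Representation k (Abelianization G) V := QuotientGroup.lift (commutator G) ρ h
  have hρ' : MonoidHom.comp ρ' Abelianization.of = ρ := rfl
  have : ρ'.IsIrreducible :=
    (isIrreducible_comp_iff (QuotientGroup.mk'_surjective (commutator G))).mp (hρ' ▸ ‹_›)
  exact IsIrreducible.finrank_eq_one_of_isMulCommutative ρ'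

end Degree

section Orthogonality

variable {k G V W : Type*} [Field k] [IsAlgClosed k] [CharZero k] [Group G] [AddCommGroup V]
  [Module k V] [FiniteDimensional k V] [AddCommGroup W] [Module k W] [FiniteDimensional k W]

theorem sum_character_mul_character_inv [Fintype G] (ρ : Representation k G V)
    (σ : Representation k G W) [ρ.IsIrreducible] [σ.IsIrreducible]
    [Decidable (ρ.character = σ.character)] :
    ∑ g : G, ρ.character g * σ.character g⁻¹ =
      if ρ.character = σ.character then (Nat.card G : k) else 0 := by
  have hG : (Nat.card G : k) ≠ 0 := Nat.cast_ne_zero.mpr Nat.card_pos.ne'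
  let _ := invertibleOfNonzero hG
  split_ifs with h
  · have hσ := char_orthonormal σ σ
    rw [if_pos ⟨.refl σ⟩, inv_mul_eq_iff_eq_mul₀ hG, mul_one] at hσ
    rw [h, hσ]
  · have hempty : ¬ Nonempty (σ.Equiv ρ) := fun ⟨e⟩ => h (char_iso e).symm
    simpa [hempty] using char_orthonormal ρ σ

theorem finrank_sq_eq_index_charCenter [Finite G] (ρ : Representation k G V) [ρ.IsIrreducible]
    (h : commutator G ≤ charCenter ρ) : Module.finrank k V ^ 2 = (charCenter ρ).index := by
  classical
  have := Fintype.ofFinite G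
  have hterm (g : G) : ρ.character g * ρ.character g⁻¹ =
      if g ∈ charCenter ρ then (Module.finrank k V : k) ^ 2 else 0 := by
    split_ifs with hg
    · exact character_mul_character_inv ρ hg
    · obtain ⟨x, hx⟩ := not_forall.mp (mt mem_charCenter.mpr hg)
      rw [character_eq_zero_of_commutatorElement_mem ρ (h (commutatorElement_mem_commutator x g))
        (by rwa [← commutatorElement_inv, inv_mem_iff]), zero_mul]
  have hsum := sum_character_mul_character_inv ρ ρ
  simp only [hterm, if_true] at hsum
  rw [← Finset.sum_filter, Finset.sum_const, nsmul_eq_mul, ← Fintype.card_subtype,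
    ← Nat.card_eq_fintype_card] at hsum
  refine Nat.eq_of_mul_eq_mul_left (Nat.card_pos (α := charCenter ρ)) ?_
  rw [Subgroup.card_mul_index]
  exact_mod_cast hsum

end Orthogonality

section LinearCharacters

variable {k G : Type*} [Field k] [Group G]

section

variable [Finite G] [HasEnoughRootsOfUnity k (Monoid.exponent (Abelianization G))]

theorem exists_linearChar_ne_one {g : G} (hg : g ∉ commutator G) : ∃ l : G →* kˣ, l g ≠ 1 := by
  obtain ⟨l, hl⟩ := CommGroup.exists_apply_ne_one_of_hasEnoughRootsOfUnity (Abelianization G) k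
    (a := Abelianization.of g) (by rwa [Ne, ← MonoidHom.mem_ker, Abelianization.ker_of])
  exact ⟨l.comp Abelianization.of, hl⟩

variable (k G) in
theorem card_linearChar : Nat.card (G →* kˣ) = (commutator G).index := by
  rw [Nat.card_congr Abelianization.lift, CommGroup.card_monoidHom_of_hasEnoughRootsOfUnity]
  rfl

theorem sum_linearChar [Fintype (G →* kˣ)] (g : G) [Decidable (g ∈ commutator G)] :
    ∑ l : G →* kˣ, (l g : k) = if g ∈ commutator G then (Nat.card (G →* kˣ) : k) else 0 := by
  split_ifs with hg
  · have h (l : G →* kˣ) : l g = 1 := Abelianization.commutator_subset_ker l hg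
    simp [h]
  · obtain ⟨l₀, hl₀⟩ := exists_linearChar_ne_one (k := k) hg
    have h : (l₀ g : k) * ∑ l : G →* kˣ, (l g : k) = ∑ l : G →* kˣ, (l g : k) := by
      rw [Finset.mul_sum]
      exact Fintype.sum_equiv (Equiv.mulLeft l₀) _ _ fun l => rfl
    exact (mul_left_eq_self₀.mp h).resolve_left fun h1 => hl₀ (Units.ext h1)

end

/-- The linear characters `l` with `l χ = χ`. -/
def twistStabilizer (χ : G → k) : Subgroup (G →* kˣ) where
  carrier := {l | ∀ g, l g * χ g = χ g}
  one_mem' g := by simp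
  mul_mem' {a b} ha hb g := by rw [MonoidHom.mul_apply, Units.val_mul, mul_assoc, hb g, ha g]
  inv_mem' {a} ha g := by rw [MonoidHom.inv_apply, Units.inv_mul_eq_iff_eq_mul, ha g]

theorem mem_twistStabilizer {χ : G → k} {l : G →* kˣ} :
    l ∈ twistStabilizer χ ↔ ∀ g, l g * χ g = χ g :=
  Iff.rfl

variable {V : Type*} [AddCommGroup V] [Module k V] [FiniteDimensional k V] [IsAlgClosed k]
  [CharZero k]

theorem sum_linearChar_mul_character [Fintype G] (ρ : Representation k G V) [ρ.IsIrreducible]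
    (l : G →* kˣ) [Decidable (l ∈ twistStabilizer ρ.character)] :
    ∑ g : G, l g * (ρ.character g * ρ.character g⁻¹) =
      if l ∈ twistStabilizer ρ.character then (Nat.card G : k) else 0 := by
  classical
  have h : l ∈ twistStabilizer ρ.character ↔ (twist ρ l).character = ρ.character := by
    simp only [mem_twistStabilizer, ← character_twist, funext_iff]
  simp only [h, ← sum_character_mul_character_inv, character_twist, mul_assoc]

theorem card_twistStabilizer_mul_card_commutator_eq_sum [Fintype G]
    [DecidablePred (· ∈ commutator G)] (ρ : Representation k G V) [ρ.IsIrreducible] :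
    (Nat.card (twistStabilizer ρ.character) * Nat.card (commutator G) : k) =
      ∑ g : G with g ∈ commutator G, ρ.character g * ρ.character g⁻¹ := by
  classical
  have := Fintype.ofFinite (G →* kˣ)
  have hΛ : (Nat.card (G →* kˣ) : k) ≠ 0 := Nat.cast_ne_zero.mpr Nat.card_pos.ne'
  have hcard : (Nat.card (G →* kˣ) * Nat.card (commutator G) : k) = Nat.card G := by
    exact_mod_cast card_linearChar k G ▸ (commutator G).index_mul_card
  refine mul_left_cancel₀ hΛ ?_
  calc (Nat.card (G →* kˣ) : k) *
        (Nat.card (twistStabilizer ρ.character) * Nat.card (commutator G))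
      = Nat.card (twistStabilizer ρ.character) * Nat.card G := by rw [← hcard]; ring
    _ = ∑ l : G →* kˣ, ∑ g : G, l g * (ρ.character g * ρ.character g⁻¹) := by
      simp only [sum_linearChar_mul_character]
      rw [← Finset.sum_filter, Finset.sum_const, nsmul_eq_mul, ← Fintype.card_subtype,
        ← Nat.card_eq_fintype_card]
    _ = ∑ g : G, ∑ l : G →* kˣ, l g * (ρ.character g * ρ.character g⁻¹) := Finset.sum_comm
    _ = Nat.card (G →* kˣ) *
        ∑ g : G with g ∈ commutator G, ρ.character g * ρ.character g⁻¹ := by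
      simp only [← Finset.sum_mul, sum_linearChar, ite_mul, zero_mul, ← Finset.sum_filter,
        Finset.mul_sum]

end LinearCharacters

section CharacterValues

variable {k V : Type*} [Field k] [AddCommGroup V] [Module k V]

theorem pow_eq_one_of_hasEigenvalue {f : Module.End k V} {m : ℕ} (hf : f ^ m = 1) {μ : k}
    (hμ : f.HasEigenvalue μ) : μ ^ m = 1 := by
  obtain ⟨v, hv⟩ := hμ.exists_hasEigenvector
  have h := hv.pow_apply m
  rw [hf, Module.End.one_apply] at h
  exact (smul_left_injective k hv.2 (by simpa using h)).symm

theorem map_character_eq_of_map_root_eq {R G : Type*} [Semiring R] [Monoid G] [IsAlgClosed k]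
    [FiniteDimensional k V] (ρ : Representation k G V) {m : ℕ} [NeZero m] {ζ : k}
    (hζ : IsPrimitiveRoot ζ m) {g : G} (hg : g ^ m = 1) {σ τ : k →+* R} (h : σ ζ = τ ζ) :
    σ (ρ.character g) = τ (ρ.character g) := by
  rw [character, Module.End.trace_eq_sum_roots_charpoly_of_splits (IsAlgClosed.splits _),
    map_multiset_sum, map_multiset_sum]
  refine congrArg Multiset.sum (Multiset.map_congr rfl fun μ hμ => ?_)
  have hev : Module.End.HasEigenvalue (ρ g) μ :=
    (Module.End.hasEigenvalue_iff_isRoot_charpoly _ _).mpr (Polynomial.isRoot_of_mem_roots hμ)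
  obtain ⟨i, -, rfl⟩ := hζ.eq_pow_of_pow_eq_one
    (pow_eq_one_of_hasEigenvalue (by rw [← map_pow, hg, map_one]) hev)
  rw [map_pow, map_pow, h]

end CharacterValues

section GroupTheory

variable {G : Type*} [Group G]

theorem exists_le_center_card_eq [Finite G] [Nontrivial G] {p : ℕ} [Fact p.Prime]
    (hG : IsPGroup p G) : ∃ N ≤ Subgroup.center G, N.Normal ∧ Nat.card N = p := by
  have := hG.center_nontrivial
  have hdvd : p ∣ Nat.card (Subgroup.center G) :=
    (hG.to_subgroup _).card_eq_or_dvd.resolve_left Finite.one_lt_card.ne'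
  obtain ⟨z, hz⟩ := exists_prime_orderOf_dvd_card' p hdvd
  have hle : Subgroup.zpowers (z : G) ≤ Subgroup.center G := Subgroup.zpowers_le.mpr z.2
  refine ⟨_, hle, ⟨fun n hn g => ?_⟩, by rw [Nat.card_zpowers, Subgroup.orderOf_coe, hz]⟩
  rwa [Subgroup.mem_center_iff.mp (hle hn), mul_inv_cancel_right]

theorem le_center_of_card_eq_prime {p : ℕ} [Fact p.Prime] (hG : IsPGroup p G) {N : Subgroup G}
    [N.Normal] (hN : Nat.card N = p) : N ≤ Subgroup.center G := by
  have : Finite N := Nat.finite_of_card_ne_zero (hN ▸ NeZero.ne p)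
  obtain ⟨z, hz, hz1⟩ := (hG.of_equiv ConjAct.toConjAct)
    |>.exists_fixed_point_of_prime_dvd_card_of_fixed_point N hN.symm.dvd
      (a := 1) (fun g => smul_one g)
  have hzZ : (z : G) ∈ Subgroup.center G := Subgroup.mem_center_iff.mpr fun g => by
    have := congrArg Subtype.val (hz (ConjAct.toConjAct g))
    rwa [ConjAct.Subgroup.val_conj_smul, ConjAct.toConjAct_smul, mul_inv_eq_iff_eq_mul] at this
  intro x hx
  obtain ⟨i, hi⟩ := mem_zpowers_of_prime_card (g := z) (g' := ⟨x, hx⟩) hN hz1.symm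
  obtain rfl : (z : G) ^ i = x := congrArg Subtype.val hi
  exact zpow_mem hzZ i

theorem card_mul_relIndex {H K : Subgroup G} (h : H ≤ K) :
    Nat.card H * H.relIndex K = Nat.card K := by
  simpa only [Subgroup.relIndex_bot_left] using Subgroup.relIndex_mul_relIndex ⊥ H K bot_le h

theorem card_commutator_eq_mul_card_commutator_quotient {N : Subgroup G} [N.Normal]
    (hN : N ≤ commutator G) :
    Nat.card (commutator G) = Nat.card N * Nat.card (commutator (G ⧸ N)) := by
  rw [← map_commutator_of_surjective (QuotientGroup.mk'_surjective N), ← Subgroup.relIndex_ker,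
    QuotientGroup.ker_mk', card_mul_relIndex hN]

theorem card_dvd_prime_of_lt {p : ℕ} (hp : p.Prime) {H K : Subgroup G}
    (hHK : H < K) (hK : Nat.card K = p ^ 2) : Nat.card H ∣ p := by
  have : Finite K := Nat.finite_of_card_ne_zero (hK ▸ pow_ne_zero 2 hp.ne_zero)
  obtain ⟨i, hi, hcard⟩ := (Nat.dvd_prime_pow hp).mp (hK ▸ Subgroup.card_dvd_of_le hHK.le)
  have hi2 : i ≠ 2 := fun h => hHK.ne (Subgroup.eq_of_le_of_card_ge hHK.le (by rw [hcard, hK, h]))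
  exact hcard ▸ Nat.pow_dvd_of_le_of_pow_dvd (by lia : i ≤ 1) (pow_one p).dvd

theorem disjoint_of_prime_card {N K : Subgroup G} (hN : (Nat.card N).Prime) (h : ¬ N ≤ K) :
    Disjoint N K := by
  have : Finite N := Nat.finite_of_card_ne_zero hN.ne_zero
  refine disjoint_iff.mpr (Subgroup.card_eq_one.mp ?_)
  refine ((Nat.dvd_prime hN).mp (Subgroup.card_dvd_of_le inf_le_left)).resolve_right fun hcard => ?_
  exact h (inf_eq_left.mp (Subgroup.eq_of_le_of_card_ge inf_le_left hcard.ge))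

end GroupTheory

theorem mod_two_eq_of_pow_mul_sq_eq {p a b i j : ℕ} [hp : Fact p.Prime] (ha : a ≠ 0) (hb : b ≠ 0)
    (h : p ^ i * a ^ 2 = p ^ j * b ^ 2) : i % 2 = j % 2 := by
  have hval := congrArg (padicValNat p) h
  rw [padicValNat.mul (NeZero.ne _) (pow_ne_zero 2 ha), padicValNat.prime_pow, padicValNat.pow,
    padicValNat.mul (NeZero.ne _) (pow_ne_zero 2 hb), padicValNat.prime_pow,
    padicValNat.pow] at hval
  lia

theorem eq_of_pow_mul_sq_eq {p a b i j : ℕ} [hp : Fact p.Prime] (ha : a ≠ 0) (hb : b ≠ 0)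
    (h : p ^ i * a ^ 2 = p ^ j * b ^ 2) (hij : i ≤ j + 1) (hji : j ≤ i + 1) : a = b := by
  have hmod := mod_two_eq_of_pow_mul_sq_eq ha hb h
  obtain rfl : i = j := by lia
  exact Nat.pow_left_injective two_ne_zero (Nat.eq_of_mul_eq_mul_left (pow_pos hp.out.pos i) h)

section Degrees

variable {k G V : Type*} [Field k] [IsAlgClosed k] [Group G] [Finite G] [AddCommGroup V]
  [Module k V] [FiniteDimensional k V] (ρ : Representation k G V) [ρ.IsIrreducible]

theorem charCenter_eq_commutator (hker : MonoidHom.ker ρ = Subgroup.center G)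
    (hcard : Nat.card (commutator G) = Nat.card (Subgroup.center G) ^ 2)
    (h : commutator G ≤ charCenter ρ) : charCenter ρ = commutator G := by
  refine (Subgroup.eq_of_le_of_card_ge h ?_).symm
  rw [← card_mul_relIndex (center_le_charCenter ρ), hcard, sq]
  exact Nat.mul_le_mul_left _
    (Nat.le_of_dvd Nat.card_pos (hker ▸ relIndex_center_charCenter_dvd ρ hker.le))

theorem charCenter_eq_commutator_of_isPGroup {p : ℕ} [Fact p.Prime] (hpG : IsPGroup p G)
    (hker : MonoidHom.ker ρ = Subgroup.center G) (hZ : Nat.card (Subgroup.center G) = p)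
    (hcard : Nat.card (commutator G) = p ^ 2)
    (hquot : Nat.card (commutator (G ⧸ MonoidHom.ker ρ)) = p) : charCenter ρ = commutator G :=
  charCenter_eq_commutator ρ hker (by rw [hcard, hZ])
    (commutator_le_charCenter_iff.mpr (le_center_of_card_eq_prime (hpG.to_quotient _) hquot))

variable [CharZero k]

theorem finrank_sq_mul_relIndex (h : commutator G ≤ Subgroup.center G) :
    (Subgroup.center G).relIndex (charCenter ρ) * Module.finrank k V ^ 2 =
      (Subgroup.center G).index := by
  have hZ := center_le_charCenter ρ
  rw [finrank_sq_eq_index_charCenter ρ (h.trans hZ), Subgroup.relIndex_mul_index hZ]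

theorem card_twistStabilizer_mul_card_commutator (hZ : Subgroup.center G ≤ commutator G)
    (hcomm : ∀ g ∈ commutator G, ∀ x, ⁅g, x⁆ ∈ Subgroup.center G)
    (hker : Disjoint (Subgroup.center G) (MonoidHom.ker ρ)) :
    Nat.card (twistStabilizer ρ.character) * Nat.card (commutator G) =
      Nat.card (Subgroup.center G) * Module.finrank k V ^ 2 := by
  classical
  have := Fintype.ofFinite G
  have hterm (g : G) (hg : g ∈ commutator G) : ρ.character g * ρ.character g⁻¹ =
      if g ∈ Subgroup.center G then (Module.finrank k V : k) ^ 2 else 0 := by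
    split_ifs with hgZ
    · exact character_mul_character_inv ρ (center_le_charCenter ρ hgZ)
    · obtain ⟨x, hx⟩ := not_forall.mp (mt mem_center_iff_commutatorElement.mpr hgZ)
      have hxg : ⁅x, g⁆ ∈ Subgroup.center G :=
        commutatorElement_inv g x ▸ inv_mem (hcomm g hg x)
      rw [character_eq_zero_of_commutatorElement_mem ρ (center_le_charCenter ρ hxg) fun hmem =>
        hx (by rw [← commutatorElement_inv, Subgroup.disjoint_def.mp hker hxg hmem, inv_one]),
        zero_mul]
  have h := card_twistStabilizer_mul_card_commutator_eq_sum ρ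
  rw [Finset.sum_congr rfl fun g hg => hterm g (Finset.mem_filter.mp hg).2, ← Finset.sum_filter,
    Finset.filter_filter, Finset.filter_congr fun g _ => and_iff_right_of_imp (@hZ g),
    Finset.sum_const, nsmul_eq_mul, ← Fintype.card_subtype, ← Nat.card_eq_fintype_card] at h
  exact_mod_cast h

end Degrees

theorem exists_isIrreducible_of_not_commutator_le (k : Type*) {G : Type*} [Field k]
    [CharZero k] [Group G] [Finite G] {N : Subgroup G} [N.Normal]
    (hN : ¬ commutator G ≤ N) :
    ∃ (n : ℕ) (ρ : Representation k G (Fin n → k)),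
      ρ.IsIrreducible ∧ Module.finrank k (Fin n → k) ≠ 1 ∧ N ≤ MonoidHom.ker ρ := by
  obtain ⟨c, hc, hcN⟩ := SetLike.not_le_iff_exists.mp hN
  obtain ⟨n, ρ, hρ, hne⟩ := exists_isIrreducible_apply_ne_one k
    (mt (QuotientGroup.eq_one_iff c).mp hcN)
  let σ : Representation k G (Fin n → k) := MonoidHom.comp ρ (QuotientGroup.mk' N)
  refine ⟨n, σ, (isIrreducible_comp_iff (QuotientGroup.mk'_surjective N)).mpr hρ,
    fun h => hne (commutator_le_ker_of_finrank_eq_one σ h hc), fun x hx => ?_⟩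
  exact (congrArg ρ ((QuotientGroup.eq_one_iff x).mpr hx)).trans (map_one ρ)

theorem isIrrChar_character {G V : Type*} [Group G] [AddCommGroup V] [Module ℂ V]
    [FiniteDimensional ℂ V] (ρ : Representation ℂ G V) [ρ.IsIrreducible] :
    IsIrrChar ρ.character := by
  obtain ⟨σ, hσ, ⟨e⟩⟩ := exists_equiv_isIrreducible ρ
  have := nontrivial_of_isIrreducible ρ
  refine ⟨_, σ, Module.finrank_pos, fun U hU => ?_, fun g => congrFun (char_iso e) g⟩
  exact (isIrreducible_iff.mp hσ).2 U fun g => Submodule.map_le_iff_le_comap.mp (hU g)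

end GCStar

namespace IsGCStar

open Representation GCStar

open scoped commutatorElement

variable {G : Type*} [Group G]

theorem quotient (hG : IsGCStar G) (N : Subgroup G) [N.Normal] : IsGCStar (G ⧸ N) := by
  have hmk := QuotientGroup.mk'_surjective N
  have inflate {χ : G ⧸ N → ℂ} (hχ : IsIrrChar χ) : IsIrrChar fun g : G => χ g := by
    obtain ⟨n, ρ, hn, hirr, hχ⟩ := hχ
    exact ⟨n, MonoidHom.comp ρ (QuotientGroup.mk' N), hn, fun U hU => hirr U (hmk.forall.mpr hU),
      fun g => hχ g⟩
  intro χ ψ hχ hψ hχ1 hψ1 heq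
  obtain ⟨σ, hσ⟩ := hG _ _ (inflate hχ) (inflate hψ) hχ1 hψ1 heq
  exact ⟨σ, hmk.forall.mpr hσ⟩

section Representations

variable {V W : Type*} [AddCommGroup V] [Module ℂ V] [FiniteDimensional ℂ V]
  [AddCommGroup W] [Module ℂ W] [FiniteDimensional ℂ W]

theorem galoisConj_character (hG : IsGCStar G) (ρ : Representation ℂ G V) [ρ.IsIrreducible]
    (σ : Representation ℂ G W) [σ.IsIrreducible] (hV : Module.finrank ℂ V ≠ 1)
    (hVW : Module.finrank ℂ V = Module.finrank ℂ W) : GaloisConj ρ.character σ.character := by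
  apply hG _ _ (isIrrChar_character ρ) (isIrrChar_character σ) <;>
    simp only [char_one, ← hVW, ne_eq, Nat.cast_eq_one, hV, not_false_eq_true]

theorem mem_ker_of_mem_ker (hG : IsGCStar G) (ρ : Representation ℂ G V) [ρ.IsIrreducible]
    (σ : Representation ℂ G W) [σ.IsIrreducible] (hV : Module.finrank ℂ V ≠ 1)
    (hVW : Module.finrank ℂ V = Module.finrank ℂ W) {z : G} (hz : z ∈ charCenter σ)
    (hρ : z ∈ MonoidHom.ker ρ) : z ∈ MonoidHom.ker σ := by
  obtain ⟨τ, hτ⟩ := hG.galoisConj_character ρ σ hV hVW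
  obtain ⟨c, hc⟩ := exists_apply_eq_smul_one σ hz
  have := nontrivial_of_isIrreducible σ
  have hW : (Module.finrank ℂ W : ℂ) ≠ 0 := Nat.cast_ne_zero.mpr Module.finrank_pos.ne'
  have h := hτ z
  rw [character, character, hc, MonoidHom.mem_ker.mp hρ] at h
  simp only [map_smul, LinearMap.trace_one, map_natCast, smul_eq_mul, hVW] at h
  rw [MonoidHom.mem_ker, hc, (mul_eq_right₀ hW).mp h, one_smul]

theorem index_twistStabilizer_le_totient (hG : IsGCStar G) (ρ : Representation ℂ G V)
    [ρ.IsIrreducible] (hV : Module.finrank ℂ V ≠ 1) {m : ℕ} [NeZero m]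
    (hexp : ∀ g : G, g ^ m = 1) : (twistStabilizer ρ.character).index ≤ m.totient := by
  have hζ := Complex.isPrimitiveRoot_exp m (NeZero.ne m)
  set ζ := Complex.exp (2 * Real.pi * Complex.I / m)
  have hconj (l : G →* ℂˣ) : ∃ σ : ℂ ≃+* ℂ, ∀ g, l g * ρ.character g = σ (ρ.character g) := by
    simpa only [GaloisConj, character_twist] using
      hG.galoisConj_character ρ (twist ρ l) hV rfl
  choose σ hσ using hconj
  let f (q : (G →* ℂˣ) ⧸ twistStabilizer ρ.character) : primitiveRoots m ℂ :=
    ⟨σ q.out ζ, (mem_primitiveRoots (NeZero.pos m)).mpr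
      (hζ.map_of_injective (σ q.out).injective)⟩
  have hf : Function.Injective f := by
    intro q r hqr
    have h : σ q.out ζ = σ r.out ζ := congrArg Subtype.val hqr
    rw [← q.out_eq', ← r.out_eq', QuotientGroup.eq]
    refine mem_twistStabilizer.mpr fun g => ?_
    rw [MonoidHom.mul_apply, MonoidHom.inv_apply, Units.val_mul, mul_assoc,
      Units.inv_mul_eq_iff_eq_mul, hσ, hσ]
    exact (map_character_eq_of_map_root_eq ρ hζ (hexp g)
      (σ := (σ q.out : ℂ →+* ℂ)) (τ := (σ r.out : ℂ →+* ℂ)) h).symm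
  calc (twistStabilizer ρ.character).index ≤ Nat.card (primitiveRoots m ℂ) :=
        Nat.card_le_card_of_injective f hf
    _ = m.totient := by
        rw [Nat.card_eq_fintype_card, Fintype.card_coe, hζ.card_primitiveRoots]

variable [Finite G]

theorem ker_le_commutator (hG : IsGCStar G) (ρ : Representation ℂ G V) [ρ.IsIrreducible]
    (hV : Module.finrank ℂ V ≠ 1) : MonoidHom.ker ρ ≤ commutator G := by
  intro z hz
  by_contra hzG
  obtain ⟨l, hl⟩ := exists_linearChar_ne_one (k := ℂ) hzG
  have htw : z ∈ charCenter (twist ρ l) := mem_charCenter.mpr fun x => by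
    have hl1 : l ⁅z, x⁆ = 1 :=
      Abelianization.commutator_subset_ker l (commutatorElement_mem_commutator z x)
    have hρ1 : ρ ⁅z, x⁆ = 1 := mem_charCenter.mp (ker_le_charCenter ρ hz) x
    rw [MonoidHom.mem_ker, twist_apply, hl1, hρ1, Units.val_one, one_smul]
  have h := hG.mem_ker_of_mem_ker ρ (twist ρ l) hV rfl htw hz
  have := nontrivial_of_isIrreducible ρ
  rw [MonoidHom.mem_ker, twist_apply, MonoidHom.mem_ker.mp hz] at h
  have hinj := smul_left_injective ℂ (one_ne_zero (α := Module.End ℂ V))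
  exact hl (Units.ext (hinj (by simpa using h)))

theorem ker_lt_commutator (hG : IsGCStar G) (ρ : Representation ℂ G V) [ρ.IsIrreducible]
    (hV : Module.finrank ℂ V ≠ 1) : MonoidHom.ker ρ < commutator G :=
  (hG.ker_le_commutator ρ hV).lt_of_not_ge (mt (finrank_eq_one_of_commutator_le_ker ρ) hV)

end Representations

section Classification

variable [Finite G]

theorem commutator_le_or_le_commutator (hG : IsGCStar G) (N : Subgroup G) [N.Normal] :
    commutator G ≤ N ∨ N ≤ commutator G := by
  refine or_iff_not_imp_left.mpr fun hN => ?_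
  obtain ⟨n, ρ, hρ, hn, hker⟩ := exists_isIrreducible_of_not_commutator_le ℂ hN
  exact hker.trans (hG.ker_le_commutator ρ hn)

theorem exists_isPGroup [Group.IsNilpotent G] (hG : IsGCStar G) (hne : commutator G ≠ ⊥) :
    ∃ p, p.Prime ∧ IsPGroup p G := by
  have : Nontrivial G := Subgroup.nontrivial_iff.mp ⟨_, _, hne⟩
  have hindex : (commutator G).index ≠ 1 :=
    mt Subgroup.index_eq_one.mp (Group.IsSolvable.commutator_lt_top_of_nontrivial G).ne
  obtain ⟨p, hp, hpindex⟩ := Nat.exists_prime_and_dvd hindex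
  have := Fact.mk hp
  have hnormal (q : ℕ) [hq : Fact q.Prime] (P : Sylow q G) : P.Normal :=
    (((Group.isNilpotent_of_finite_tfae (G := G)).out 0 3 :).mp ‹_› :) q hq P
  let P : Sylow p G := default
  have := hnormal p P
  have hP : commutator G ≤ P := (hG.commutator_le_or_le_commutator P).resolve_right fun h =>
    P.not_dvd_index (hpindex.trans (Subgroup.index_dvd_of_le h))
  refine ⟨p, hp, IsPGroup.of_card (Nat.eq_prime_pow_of_unique_prime_dvd Nat.card_pos.ne' ?_)⟩
  intro q hq hqG
  by_contra hqp
  have := Fact.mk hq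
  let Q : Sylow q G := default
  have := hnormal q Q
  have hdisj : Disjoint (P : Subgroup G) Q :=
    IsPGroup.disjoint_of_ne p q (Ne.symm hqp) _ _ P.isPGroup' Q.isPGroup'
  rcases hG.commutator_le_or_le_commutator Q with h | h
  · exact hne (le_bot_iff.mp (hdisj hP h))
  · exact Q.ne_bot_of_dvd_card hqG (le_bot_iff.mp (hdisj (h.trans hP) le_rfl))

variable {p : ℕ} [Fact p.Prime] {V W : Type*} [AddCommGroup V] [Module ℂ V]
  [FiniteDimensional ℂ V] [AddCommGroup W] [Module ℂ W] [FiniteDimensional ℂ W]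

theorem card_ker_dvd_prime (hG : IsGCStar G) (hcard : Nat.card (commutator G) = p ^ 2)
    (ρ : Representation ℂ G V) [ρ.IsIrreducible] (hV : Module.finrank ℂ V ≠ 1) :
    Nat.card (MonoidHom.ker ρ) ∣ p :=
  card_dvd_prime_of_lt Fact.out (hG.ker_lt_commutator ρ hV) hcard

theorem exists_relIndex_charCenter_eq_pow (hG : IsGCStar G)
    (hcard : Nat.card (commutator G) = p ^ 2) (hle : commutator G ≤ Subgroup.center G)
    (ρ : Representation ℂ G V) [ρ.IsIrreducible] (hV : Module.finrank ℂ V ≠ 1) :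
    ∃ i ≤ 1, (Subgroup.center G).relIndex (charCenter ρ) = p ^ i := by
  rw [← Nat.dvd_prime_pow Fact.out, pow_one]
  exact (relIndex_center_charCenter_dvd ρ ((hG.ker_le_commutator ρ hV).trans hle)).trans
    (hG.card_ker_dvd_prime hcard ρ hV)

theorem finrank_eq_of_commutator_le_center (hG : IsGCStar G)
    (hcard : Nat.card (commutator G) = p ^ 2) (hle : commutator G ≤ Subgroup.center G)
    (ρ : Representation ℂ G V) [ρ.IsIrreducible] (hV : Module.finrank ℂ V ≠ 1)
    (σ : Representation ℂ G W) [σ.IsIrreducible] (hW : Module.finrank ℂ W ≠ 1) :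
    Module.finrank ℂ V = Module.finrank ℂ W := by
  obtain ⟨i, hi, hiV⟩ := hG.exists_relIndex_charCenter_eq_pow hcard hle ρ hV
  obtain ⟨j, hj, hjW⟩ := hG.exists_relIndex_charCenter_eq_pow hcard hle σ hW
  have := nontrivial_of_isIrreducible ρ
  have := nontrivial_of_isIrreducible σ
  refine eq_of_pow_mul_sq_eq (p := p) Module.finrank_pos.ne' Module.finrank_pos.ne' ?_
    (hi.trans (Nat.le_add_left 1 j)) (hj.trans (Nat.le_add_left 1 i))
  rw [← hiV, ← hjW, finrank_sq_mul_relIndex ρ hle, finrank_sq_mul_relIndex σ hle]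

theorem exists_index_twistStabilizer_eq_pow (hG : IsGCStar G) (hpG : IsPGroup p G)
    (ρ : Representation ℂ G V) [ρ.IsIrreducible] (hV : Module.finrank ℂ V ≠ 1) {n : ℕ}
    (hn : n ≠ 0) (hexp : ∀ g : G, g ^ p ^ n = 1) :
    ∃ i < n, (twistStabilizer ρ.character).index = p ^ i := by
  have hp : p.Prime := Fact.out
  obtain ⟨e, he⟩ := IsPGroup.iff_card.mp hpG
  have hdvd : (twistStabilizer ρ.character).index ∣ p ^ e :=
    (Subgroup.index_dvd_card _).trans (card_linearChar ℂ G ▸ he ▸ Subgroup.index_dvd_card _)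
  obtain ⟨i, -, hi⟩ := (Nat.dvd_prime_pow hp).mp hdvd
  have hlt : p ^ i < p ^ n := hi ▸ (hG.index_twistStabilizer_le_totient ρ hV hexp).trans_lt
    (Nat.totient_lt _ (Nat.one_lt_pow hn hp.one_lt))
  exact ⟨i, (Nat.pow_lt_pow_iff_right hp.one_lt).mp hlt, hi⟩

theorem finrank_eq_of_ker_eq_center (hG : IsGCStar G) (hpG : IsPGroup p G)
    (hcard : Nat.card (commutator G) = p ^ 2) (hZ : Nat.card (Subgroup.center G) = p)
    (hle : Subgroup.center G ≤ commutator G) (ρ : Representation ℂ G V) [ρ.IsIrreducible]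
    (hρ : MonoidHom.ker ρ = Subgroup.center G) (σ : Representation ℂ G W) [σ.IsIrreducible]
    (hW : Module.finrank ℂ W ≠ 1) (hσ : Disjoint (Subgroup.center G) (MonoidHom.ker σ)) :
    Module.finrank ℂ V = Module.finrank ℂ W := by
  have hp : p.Prime := Fact.out
  have hquot : Nat.card (commutator (G ⧸ MonoidHom.ker ρ)) = p := by
    have h := card_commutator_eq_mul_card_commutator_quotient (hρ ▸ hle)
    have hker : Nat.card (MonoidHom.ker ρ) = p := by rw [hρ, hZ]
    rw [hcard, hker, sq] at h
    exact (Nat.eq_of_mul_eq_mul_left hp.pos h).symm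
  have hZρ := charCenter_eq_commutator_of_isPGroup ρ hpG hρ hZ hcard hquot
  have hexp (g : G) : g ^ p ^ 3 = 1 := by
    have hg := pow_card_commutator_quotient_mem_charCenter hZρ.ge g
    rw [hquot, hZρ] at hg
    rw [pow_succ', pow_mul, ← hcard]
    exact orderOf_dvd_iff_pow_eq_one.mp (Subgroup.orderOf_dvd_natCard _ hg)
  obtain ⟨i, hi, hindex⟩ :=
    hG.exists_index_twistStabilizer_eq_pow hpG σ hW three_ne_zero hexp
  have hV2 : Module.finrank ℂ V ^ 2 = p ^ i * Nat.card (twistStabilizer σ.character) := by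
    rw [finrank_sq_eq_index_charCenter ρ hZρ.ge, hZρ, ← card_linearChar ℂ G, ← hindex,
      Subgroup.index_mul_card]
  have hW2 : Module.finrank ℂ W ^ 2 = p * Nat.card (twistStabilizer σ.character) := by
    have hS := card_twistStabilizer_mul_card_commutator σ hle
      (fun g hg x => hρ ▸ mem_charCenter.mp (hZρ.ge hg) x) hσ
    rw [hcard, hZ] at hS
    exact Nat.eq_of_mul_eq_mul_left hp.pos (by rw [← hS]; ring)
  have := nontrivial_of_isIrreducible ρ
  have := nontrivial_of_isIrreducible σ
  refine eq_of_pow_mul_sq_eq (p := p) (i := 1) (j := i) Module.finrank_pos.ne'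
    Module.finrank_pos.ne' ?_ (Nat.le_add_left 1 i) (Nat.lt_succ_iff.mp hi)
  rw [hV2, hW2]
  ring

theorem finrank_eq_of_not_commutator_le_center (hG : IsGCStar G) (hpG : IsPGroup p G)
    (hcard : Nat.card (commutator G) = p ^ 2) (hnle : ¬ commutator G ≤ Subgroup.center G)
    {N : Subgroup G} (hN : N ≤ Subgroup.center G) (hNcard : Nat.card N = p)
    (ρ : Representation ℂ G V) [ρ.IsIrreducible] (hV : Module.finrank ℂ V ≠ 1)
    (hρ : N ≤ MonoidHom.ker ρ) (σ : Representation ℂ G W) [σ.IsIrreducible]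
    (hW : Module.finrank ℂ W ≠ 1) (hσ : ¬ N ≤ MonoidHom.ker σ) :
    Module.finrank ℂ V = Module.finrank ℂ W := by
  have hp : p.Prime := Fact.out
  have hle := (hG.commutator_le_or_le_commutator (Subgroup.center G)).resolve_left hnle
  have hNZ : N = Subgroup.center G := Subgroup.eq_of_le_of_card_ge hN (hNcard ▸
    Nat.le_of_dvd hp.pos (card_dvd_prime_of_lt hp (hle.lt_of_not_ge hnle) hcard))
  have hNρ : N = MonoidHom.ker ρ := Subgroup.eq_of_le_of_card_ge hρ (hNcard ▸
    Nat.le_of_dvd hp.pos (hG.card_ker_dvd_prime hcard ρ hV))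
  have hdisj : Disjoint (Subgroup.center G) (MonoidHom.ker σ) :=
    hNZ ▸ disjoint_of_prime_card (hNcard.symm ▸ hp) hσ
  exact hG.finrank_eq_of_ker_eq_center hpG hcard (hNZ ▸ hNcard) hle ρ (hNρ ▸ hNZ) σ hW hdisj

theorem card_commutator_ne_prime_sq (hG : IsGCStar G) (hpG : IsPGroup p G) :
    Nat.card (commutator G) ≠ p ^ 2 := by
  intro hcard
  have hp : p.Prime := Fact.out
  have : Nontrivial (commutator G) :=
    Finite.one_lt_card_iff_nontrivial.mp (hcard ▸ Nat.one_lt_pow two_ne_zero hp.one_lt)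
  have : Nontrivial G := (commutator G).subtype_injective.nontrivial
  obtain ⟨N, hNZ, _, hN⟩ := exists_le_center_card_eq hpG
  have hnle : ¬ commutator G ≤ N := fun h =>
    (lt_self_pow₀ hp.one_lt one_lt_two).not_ge
      (hcard ▸ hN ▸ Nat.le_of_dvd Nat.card_pos (Subgroup.card_dvd_of_le h))
  have hNG := (hG.commutator_le_or_le_commutator N).resolve_left hnle
  obtain ⟨m, ρ, _, hm, hρ⟩ := exists_isIrreducible_of_not_commutator_le ℂ hnle
  have hNbot : N ≠ ⊥ := fun h => hp.ne_one (by rw [← hN, h, Subgroup.card_bot])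
  obtain ⟨z, hz, hz1⟩ := N.bot_or_exists_ne_one.resolve_left hNbot
  obtain ⟨n, σ, _, hσ⟩ := exists_isIrreducible_apply_ne_one ℂ hz1
  have hn : Module.finrank ℂ (Fin n → ℂ) ≠ 1 := fun h =>
    hσ (commutator_le_ker_of_finrank_eq_one σ h (hNG hz))
  have hmn : Module.finrank ℂ (Fin m → ℂ) = Module.finrank ℂ (Fin n → ℂ) := by
    by_cases hle : commutator G ≤ Subgroup.center G
    · exact hG.finrank_eq_of_commutator_le_center hcard hle ρ hm σ hn
    · exact hG.finrank_eq_of_not_commutator_le_center hpG hcard hle hNZ hN ρ hm hρ σ hn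
        fun h => hσ (h hz)
  exact hσ (hG.mem_ker_of_mem_ker ρ σ hm hmn (center_le_charCenter σ (hNZ hz)) (hρ hz))

theorem card_commutator_eq_prime {p : ℕ} [Fact p.Prime] {G : Type*} [Group G] [Finite G]
    (hG : IsGCStar G) (hpG : IsPGroup p G) (hne : commutator G ≠ ⊥) :
    Nat.card (commutator G) = p := by
  induction hc : Nat.card G using Nat.strong_induction_on generalizing G with
  | _ c ih =>
  subst hc
  have hp : p.Prime := Fact.out
  have : Nontrivial G := Subgroup.nontrivial_iff.mp ⟨_, _, hne⟩
  obtain ⟨N, -, _, hN⟩ := exists_le_center_card_eq hpG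
  by_contra hnp
  have hnle : ¬ commutator G ≤ N := fun h =>
    ((Nat.dvd_prime hp).mp (hN ▸ Subgroup.card_dvd_of_le h)).elim
      (fun h1 => hne (Subgroup.card_eq_one.mp h1)) hnp
  have hmul := card_commutator_eq_mul_card_commutator_quotient
    ((hG.commutator_le_or_le_commutator N).resolve_left hnle)
  have hQne : commutator (G ⧸ N) ≠ ⊥ := fun h =>
    hnp (by rw [hmul, h, Subgroup.card_bot, mul_one, hN])
  have hlt : Nat.card (G ⧸ N) < Nat.card G := by
    rw [Subgroup.card_eq_card_quotient_mul_card_subgroup N, hN]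
    exact lt_mul_of_one_lt_right Nat.card_pos hp.one_lt
  refine hG.card_commutator_ne_prime_sq hpG ?_
  rw [hmul, hN, ih _ hlt (hG.quotient N) (hpG.to_quotient N) hQne rfl, sq]

theorem isCyclic_center (hG : IsGCStar G) (hprime : (Nat.card (commutator G)).Prime) :
    IsCyclic (Subgroup.center G) := by
  have hne : ¬ commutator G ≤ ⊥ := fun h =>
    hprime.ne_one (Subgroup.card_eq_one.mpr (le_bot_iff.mp h))
  obtain ⟨n, ρ, _, hn, -⟩ := exists_isIrreducible_of_not_commutator_le ℂ hne
  have hlt := hG.ker_lt_commutator ρ hn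
  refine isCyclic_center_of_ker_eq_bot ρ (Subgroup.card_eq_one.mp ?_)
  refine ((Nat.dvd_prime hprime).mp (Subgroup.card_dvd_of_le hlt.le)).resolve_right fun h => ?_
  exact hlt.ne (Subgroup.eq_of_le_of_card_ge hlt.le h.ge)

end Classification

end IsGCStar

/-- A finite nilpotent `GC*`-group is abelian, or a group of prime power order with cyclic
center and commutator subgroup of prime order. -/
theorem nilpotent_gcstar {G : Type*} [Group G] [Finite G]
    (hnil : Group.IsNilpotent G) (h : IsGCStar G) :
    (∀ a b : G, a * b = b * a) ∨
    (∃ p : ℕ, p.Prime ∧ IsPGroup p G ∧ IsCyclic (Subgroup.center G) ∧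
      (Nat.card (commutator G)).Prime) := by
  refine or_iff_not_imp_left.mpr fun hab => ?_
  have hne : commutator G ≠ ⊥ := fun hbot =>
    hab ((commutator_eq_bot_iff G).mp hbot).is_comm.comm
  obtain ⟨p, hp, hpG⟩ := h.exists_isPGroup hne
  have := Fact.mk hp
  have hcard : (Nat.card (commutator G)).Prime := (h.card_commutator_eq_prime hpG hne).symm ▸ hp
  exact ⟨p, hp, hpG, h.isCyclic_center hcard, hcard⟩
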